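/- arXiv:2212.12591 — 3 statements merged into one kernel-verified Lean document; each statement's English description precedes it below -/
import Mathlib

section
/- Let ρ ∈ J(I(X,K)) and β = δ + ρ. Then β is a unit of I(X,K), and the inner automorphism ξ_β : f ↦ βfβ⁻¹ is a regular Hom-Lie structure on I(X,K) if and only if ρ(x,y) = 0 for every x < y such that x ∉ Min(X) or y ∉ Max(X) (i.e., if and only if ρ ∈ Z(J(I(X,K)))). -/
open IncidenceAlgebra

attribute [local instance 100] LieRing.ofAssociativeRing

/-- The Hom-Jacobi identity for a map `φ` on a Lie ring. -/
def HomJacobi {A : Type*} [LieRing A] (φ : A → A) : Prop :=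
  ∀ a b c : A, ⁅⁅a, b⁆, φ c⁆ + ⁅⁅b, c⁆, φ a⁆ + ⁅⁅c, a⁆, φ b⁆ = 0

/-- `φ` is a regular Hom-Lie structure: a Lie algebra automorphism satisfying Hom-Jacobi. -/
def IsRegHomLie (K : Type*) {A : Type*} [CommRing K] [LieRing A] [LieAlgebra K A]
    (φ : A → A) : Prop :=
  (∃ e : A ≃ₗ⁅K⁆ A, ⇑e = φ) ∧ HomJacobi φ

/-- The "matrix unit" `e_{xy}` of the incidence algebra, for `x ≤ y`. -/
def eSingle (K : Type*) [Field K] {X : Type*} [PartialOrder X] [DecidableEq X]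
    (x y : X) (_h : x ≤ y) : IncidenceAlgebra K X where
  toFun u v := if u = x ∧ v = y then 1 else 0
  eq_zero_of_not_le' u v huv := by
    split_ifs with h'
    · exact absurd (by rw [h'.1, h'.2]; exact _h) huv
    · rfl

/-- The multiplicative map `M_σ` on the incidence algebra: `(M_σ f)(x,y) = σ(x,y) f(x,y)`. -/
def Mmul (K : Type*) [Field K] {X : Type*} [PartialOrder X]
    (σ : X → X → K) (f : IncidenceAlgebra K X) : IncidenceAlgebra K X where
  toFun u v := σ u v * f u v
  eq_zero_of_not_le' u v huv := by
    rw [apply_eq_zero_of_not_le huv f, mul_zero]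

/-- The conjugation map `ξ_β : f ↦ β f β⁻¹`. -/
noncomputable def xiMap {K : Type*} [Field K] {X : Type*} [PartialOrder X] [DecidableEq X]
    [LocallyFiniteOrder X] (β : IncidenceAlgebra K X) :
    IncidenceAlgebra K X → IncidenceAlgebra K X :=
  fun f => β * f * Ring.inverse β

/-- `l(x,y)`: the maximal length of a chain from `x` to `y`. -/
noncomputable def chainLen {X : Type*} [PartialOrder X] (x y : X) : ℕ :=
  sSup {n : ℕ | ∃ c : Fin (n + 1) → X, StrictMono c ∧ c 0 = x ∧ c (Fin.last n) = y}

/-- `J^m`: the `K`-span of the `e_{xy}` with `x < y` and `l(x,y) ≥ m`. -/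
noncomputable def Jpow (K : Type*) [Field K] {X : Type*} [PartialOrder X] [DecidableEq X]
    (m : ℕ) : Submodule K (IncidenceAlgebra K X) :=
  Submodule.span K {f | ∃ x y, ∃ h : x < y, m ≤ chainLen x y ∧ f = eSingle K x y h.le}


section helpers

set_option linter.unusedSectionVars false

variable {K : Type*} [Field K] {X : Type*} [PartialOrder X] [DecidableEq X] [LocallyFiniteOrder X]

lemma eS_apply (x y : X) (h : x ≤ y) (u v : X) :
    eSingle K x y h u v = if u = x ∧ v = y then 1 else 0 := rfl

lemma eS_mul (x y : X) (h : x ≤ y) (f : IncidenceAlgebra K X) (u v : X) :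
    (eSingle K x y h * f) u v = if u = x then f y v else 0 := by
  rw [IncidenceAlgebra.mul_apply]
  split_ifs with hu
  · subst hu
    by_cases hv : y ≤ v
    · rw [Finset.sum_eq_single y]
      · simp [eS_apply]
      · intro b _ hb
        simp [eS_apply, hb]
      · intro hy
        exact absurd (Finset.mem_Icc.2 ⟨h, hv⟩) hy
    · rw [apply_eq_zero_of_not_le hv]
      refine Finset.sum_eq_zero fun b hb => ?_
      by_cases hby : b = y
      · subst hby
        exact absurd (Finset.mem_Icc.1 hb).2 hv
      · simp [eS_apply, hby]
  · refine Finset.sum_eq_zero fun b hb => ?_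
    simp [eS_apply, hu]

lemma mul_eS (x y : X) (h : x ≤ y) (f : IncidenceAlgebra K X) (u v : X) :
    (f * eSingle K x y h) u v = if v = y then f u x else 0 := by
  rw [IncidenceAlgebra.mul_apply]
  split_ifs with hu
  · subst hu
    by_cases hv : u ≤ x
    · rw [Finset.sum_eq_single x]
      · simp [eS_apply]
      · intro b _ hb
        simp [eS_apply, hb]
      · intro hy
        exact absurd (Finset.mem_Icc.2 ⟨hv, h⟩) hy
    · rw [apply_eq_zero_of_not_le hv]
      refine Finset.sum_eq_zero fun b hb => ?_
      by_cases hby : b = x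
      · subst hby
        exact absurd (Finset.mem_Icc.1 hb).1 hv
      · simp [eS_apply, hby]
  · refine Finset.sum_eq_zero fun b hb => ?_
    simp [eS_apply, hu]

lemma pow_card (ρ : IncidenceAlgebra K X) (hρ : ∀ x : X, ρ x x = 0) (n : ℕ) :
    ∀ x y : X, (ρ ^ n) x y ≠ 0 → n < (Finset.Icc x y).card := by
  induction n with
  | zero =>
    intro x y h
    exact Finset.card_pos.2 (Finset.nonempty_Icc.2 (le_of_ne_zero h))
  | succ n ih =>
    intro x y h
    rw [pow_succ, IncidenceAlgebra.mul_apply] at h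
    obtain ⟨z, hz, hne⟩ := Finset.exists_ne_zero_of_sum_ne_zero h
    have h1 := ih x z (left_ne_zero_of_mul hne)
    have hzy : z ≠ y := by
      rintro rfl
      exact hne (by rw [hρ, mul_zero])
    have hz' := Finset.mem_Icc.1 hz
    have : (Finset.Icc x z).card < (Finset.Icc x y).card :=
      Finset.card_lt_card (Finset.Icc_ssubset_Icc_right (hz'.1.trans hz'.2) le_rfl
        (lt_of_le_of_ne hz'.2 hzy))
    omega

lemma isUnit_one_add' [Fintype X] (ρ : IncidenceAlgebra K X) (hρ : ∀ x : X, ρ x x = 0) :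
    IsUnit (1 + ρ) := by
  apply IsNilpotent.isUnit_one_add
  refine ⟨Fintype.card X, ?_⟩
  ext x y _
  by_contra h
  have := pow_card ρ hρ _ x y h
  have := Finset.card_le_univ (Finset.Icc x y)
  omega

lemma mul_diag (f g : IncidenceAlgebra K X) (x : X) : (f * g) x x = f x x * g x x := by
  simp [IncidenceAlgebra.mul_apply]

/-- `f` vanishes off minimal-maximal strict pairs. -/
def ZJ (f : IncidenceAlgebra K X) : Prop :=
  ∀ x y : X, f x y ≠ 0 → x < y ∧ IsMin x ∧ IsMax y

lemma ZJ_mul_J {f g : IncidenceAlgebra K X} (hf : ZJ f) (hg : ∀ x, g x x = 0) : f * g = 0 := by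
  ext x y _
  rw [IncidenceAlgebra.mul_apply]
  refine Finset.sum_eq_zero fun z hz => ?_
  by_contra hne
  have h1 := (hf x z (left_ne_zero_of_mul hne)).2.2
  have h2 : z = y := h1.eq_of_le (Finset.mem_Icc.1 hz).2
  subst h2
  exact hne (by rw [hg, mul_zero])

lemma J_mul_ZJ {f g : IncidenceAlgebra K X} (hf : ZJ f) (hg : ∀ x, g x x = 0) : g * f = 0 := by
  ext x y _
  rw [IncidenceAlgebra.mul_apply]
  refine Finset.sum_eq_zero fun z hz => ?_
  by_contra hne
  have h1 := (hf z y (right_ne_zero_of_mul hne)).2.1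
  have h2 : x = z := (h1.eq_of_ge (Finset.mem_Icc.1 hz).1).symm
  subst h2
  exact hne (by rw [hg, zero_mul])

lemma ZJ_mul {f : IncidenceAlgebra K X} (hf : ZJ f) (g : IncidenceAlgebra K X) : ZJ (f * g) := by
  intro x y h
  rw [IncidenceAlgebra.mul_apply] at h
  obtain ⟨z, hz, hne⟩ := Finset.exists_ne_zero_of_sum_ne_zero h
  have h1 := hf x z (left_ne_zero_of_mul hne)
  have h2 : z = y := h1.2.2.eq_of_le (Finset.mem_Icc.1 hz).2
  exact h2 ▸ h1

lemma mul_ZJ {f : IncidenceAlgebra K X} (hf : ZJ f) (g : IncidenceAlgebra K X) : ZJ (g * f) := by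
  intro x y h
  rw [IncidenceAlgebra.mul_apply] at h
  obtain ⟨z, hz, hne⟩ := Finset.exists_ne_zero_of_sum_ne_zero h
  have h1 := hf z y (right_ne_zero_of_mul hne)
  have h2 : x = z := (h1.2.1.eq_of_ge (Finset.mem_Icc.1 hz).1).symm
  exact h2 ▸ h1

lemma ZJ.diag {f : IncidenceAlgebra K X} (hf : ZJ f) (x : X) : f x x = 0 := by
  by_contra h
  exact lt_irrefl _ (hf x x h).1

lemma brk_ZJ {ρ : IncidenceAlgebra K X} (h : ZJ ρ) (a b c : IncidenceAlgebra K X) :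
    ⁅⁅a, b⁆, ρ * c - c * ρ⁆ = 0 := by
  have hab : ∀ x, (⁅a, b⁆ : IncidenceAlgebra K X) x x = 0 := by
    intro x
    rw [LieRing.of_associative_ring_bracket, IncidenceAlgebra.sub_apply, mul_diag, mul_diag]
    ring
  rw [LieRing.of_associative_ring_bracket, mul_sub, sub_mul,
    J_mul_ZJ (ZJ_mul h c) hab, J_mul_ZJ (mul_ZJ h c) hab,
    ZJ_mul_J (ZJ_mul h c) hab, ZJ_mul_J (mul_ZJ h c) hab]
  simp

/-- conjugation as algebra equivalence -/
def conjEquiv (β γ : IncidenceAlgebra K X) (h1 : β * γ = 1) (h2 : γ * β = 1) :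
    IncidenceAlgebra K X ≃ₐ[K] IncidenceAlgebra K X where
  toFun f := β * f * γ
  invFun f := γ * f * β
  left_inv f := by
    calc γ * (β * f * γ) * β = (γ * β) * f * (γ * β) := by noncomm_ring
      _ = f := by rw [h2]; simp
  right_inv f := by
    calc β * (γ * f * β) * γ = (β * γ) * f * (β * γ) := by noncomm_ring
      _ = f := by rw [h1]; simp
  map_mul' f g := by
    calc β * (f * g) * γ = β * f * 1 * g * γ := by noncomm_ring
      _ = β * f * γ * (β * g * γ) := by rw [← h2]; noncomm_ring
  map_add' f g := by rw [mul_add, add_mul]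
  commutes' r := by
    rw [← Algebra.commutes r β, mul_assoc, h1, mul_one]

lemma conj_idem (β γ : IncidenceAlgebra K X) (z u v : X) :
    (β * eSingle K z z le_rfl * γ) u v = β u z * γ z v := by
  rw [mul_assoc, IncidenceAlgebra.mul_apply]
  simp only [eS_mul, mul_ite, mul_zero, Finset.sum_ite_eq', Finset.mem_Icc]
  split_ifs with h
  · rfl
  · by_contra hne
    exact h (Finset.mem_Icc.2 ⟨le_of_ne_zero (left_ne_zero_of_mul (Ne.symm hne)),
      le_of_ne_zero (right_ne_zero_of_mul (Ne.symm hne))⟩)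

lemma key_comm (φ : IncidenceAlgebra K X → IncidenceAlgebra K X) (hφ : HomJacobi φ)
    (x y z : X) (hxy : x < y) (hzx : z ≠ x) (hzy : z ≠ y) :
    eSingle K x y hxy.le * φ (eSingle K z z le_rfl) =
      φ (eSingle K z z le_rfl) * eSingle K x y hxy.le := by
  have h := hφ (eSingle K x x le_rfl) (eSingle K x y hxy.le) (eSingle K z z le_rfl)
  have e1 : ⁅eSingle K x x le_rfl, eSingle K x y hxy.le⁆ = eSingle K x y hxy.le := by
    rw [LieRing.of_associative_ring_bracket]
    ext u v _
    rw [IncidenceAlgebra.sub_apply, eS_mul, eS_mul]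
    simp only [eS_apply]
    have := hxy.ne
    grind
  have e2 : ⁅eSingle K x y hxy.le, eSingle K z z le_rfl⁆ = 0 := by
    rw [LieRing.of_associative_ring_bracket]
    ext u v _
    rw [IncidenceAlgebra.sub_apply, eS_mul, eS_mul, IncidenceAlgebra.zero_apply]
    simp only [eS_apply]
    grind
  have e3 : ⁅eSingle K z z le_rfl, eSingle K x x le_rfl⁆ = 0 := by
    rw [LieRing.of_associative_ring_bracket]
    ext u v _
    rw [IncidenceAlgebra.sub_apply, eS_mul, eS_mul, IncidenceAlgebra.zero_apply]
    simp only [eS_apply]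
    grind
  rw [e1, e2, e3, zero_lie, zero_lie, add_zero, add_zero,
    LieRing.of_associative_ring_bracket] at h
  exact sub_eq_zero.1 h

end helpers

theorem stmt5 {K : Type*} [Field K] {X : Type*} [PartialOrder X] [Fintype X] [DecidableEq X]
    [LocallyFiniteOrder X]
    (hcard : 1 < Fintype.card X)
    (hconn : ∀ x y : X, Relation.ReflTransGen (fun a b : X => a ≤ b ∨ b ≤ a) x y)
    (ρ : IncidenceAlgebra K X) (hρ : ∀ x : X, ρ x x = 0) :
    IsUnit (1 + ρ) ∧
      (IsRegHomLie K (xiMap (1 + ρ)) ↔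
        ∀ x y : X, x < y → (¬IsMin x ∨ ¬IsMax y) → ρ x y = 0) := by
  have hu := isUnit_one_add' ρ hρ
  refine ⟨hu, ?_⟩
  obtain ⟨γ, hγ⟩ : ∃ γ, γ = Ring.inverse (1 + ρ) := ⟨_, rfl⟩
  have h1 : (1 + ρ) * γ = 1 := by rw [hγ]; exact Ring.mul_inverse_cancel _ hu
  have h2 : γ * (1 + ρ) = 1 := by rw [hγ]; exact Ring.inverse_mul_cancel _ hu
  have hxi : ∀ f, xiMap (1 + ρ) f = (1 + ρ) * f * γ := by intro f; rw [hγ]; rfl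
  have hβd : ∀ x, (1 + ρ) x x = 1 := by
    intro x
    rw [IncidenceAlgebra.add_apply, hρ, IncidenceAlgebra.one_apply, if_pos rfl, add_zero]
  have hβo : ∀ x y, x ≠ y → (1 + ρ) x y = ρ x y := by
    intro x y h
    rw [IncidenceAlgebra.add_apply, IncidenceAlgebra.one_apply, if_neg h, zero_add]
  have hγd : ∀ x, γ x x = 1 := by
    intro x
    have := congrArg (fun f : IncidenceAlgebra K X => f x x) h1
    simp only [mul_diag, hβd, one_mul] at this
    rw [this, IncidenceAlgebra.one_apply, if_pos rfl]
  constructor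
  · rintro ⟨-, hJ⟩
    have hk := key_comm _ hJ
    -- entries
    have hA : ∀ x y, x < y → ¬ IsMin x → ρ x y = 0 := by
      intro x y hxy hmin
      obtain ⟨w, hw⟩ := not_isMin_iff.1 hmin
      have h := hk w x y hw (hw.trans hxy).ne' hxy.ne'
      have h := congrArg (fun f : IncidenceAlgebra K X => f w y) h
      simp only [eS_mul, mul_eS, hxi, conj_idem] at h
      rw [if_pos trivial, if_neg hxy.ne', hγd, mul_one, hβo _ _ hxy.ne] at h
      exact h
    have hB : ∀ x y, x < y → ¬ IsMax y → γ x y = 0 := by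
      intro x y hxy hmax
      obtain ⟨w, hw⟩ := not_isMax_iff.1 hmax
      have h := hk y w x hw hxy.ne (hxy.trans hw).ne
      have h := congrArg (fun f : IncidenceAlgebra K X => f x w) h
      simp only [eS_mul, mul_eS, hxi, conj_idem] at h
      rw [if_pos trivial, if_neg hxy.ne, hβd, one_mul] at h
      exact h.symm
    rintro x y hxy (h | h)
    · exact hA x y hxy h
    · have e := congrArg (fun f : IncidenceAlgebra K X => f x y) h1
      simp only [IncidenceAlgebra.mul_apply] at e
      rw [Finset.sum_eq_single y, IncidenceAlgebra.one_apply, if_neg hxy.ne, hγd, mul_one, hβo _ _ hxy.ne] at e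
      · exact e
      · intro b hb hby
        rw [hB b y (lt_of_le_of_ne (Finset.mem_Icc.1 hb).2 hby) h, mul_zero]
      · intro hy
        exact absurd (Finset.mem_Icc.2 ⟨hxy.le, le_rfl⟩) hy
  · intro H
    have hZ : ZJ ρ := by
      intro x y hne
      have hxy : x < y := lt_of_le_of_ne (le_of_ne_zero hne) (by
        rintro rfl
        exact hne (hρ x))
      by_contra hc
      refine hne (H x y hxy ?_)
      by_contra hc'
      push Not at hc'
      exact hc ⟨hxy, hc'⟩
    have hρρ : ρ * ρ = 0 := ZJ_mul_J hZ hρ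
    have hγ' : γ = 1 - ρ := by
      have : (1 + ρ) * (1 - ρ) = 1 := by
        rw [mul_sub, add_mul, add_mul, hρρ]; simp
      calc γ = γ * ((1 + ρ) * (1 - ρ)) := by rw [this, mul_one]
        _ = 1 - ρ := by rw [← mul_assoc, h2, one_mul]
    refine ⟨⟨(conjEquiv (1 + ρ) γ h1 h2).toLieEquiv, ?_⟩, ?_⟩
    · funext f
      rw [hxi]
      rfl
    · have hform : ∀ c, xiMap (1 + ρ) c = c + (ρ * c - c * ρ) := by
        intro c
        have h0 : ρ * c * ρ = 0 := ZJ_mul_J (ZJ_mul hZ c) hρ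
        rw [hxi, hγ', mul_sub, mul_one, add_mul, one_mul, add_mul, h0]
        abel
      intro a b c
      simp only [hform, lie_add, brk_ZJ hZ, add_zero]
      have := lie_jacobi c a b
      rw [← lie_skew ⁅a, b⁆ c, ← lie_skew ⁅b, c⁆ a, ← lie_skew ⁅c, a⁆ b, ← neg_add, ← neg_add,
        this, neg_zero]
end

section
/- Let φ be a Lie algebra automorphism of I(X,K). Then φ is a regular Hom-Lie structure on I(X,K) if and only if there exist (i) β = δ + ρ with ρ ∈ Z(J(I(X,K))), (ii) a multiplicative map σ : {(x,y) ∈ X² : x≤y} → K∖{0} with σ(x,y) = 1 for every x < y such that x ∉ Min(X) or y ∉ Max(X), and (iii) a K-linear map ν : I(X,K) → I(X,K) all of whose values are scalar multiples of δ and which vanishes on J(I(X,K)), such that φ = ξ_β ∘ M_σ + ν. Moreover, such β, σ and ν are unique. -/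
open IncidenceAlgebra

attribute [local instance 100] LieRing.ofAssociativeRing

/-- The data of a decomposition `φ = ξ_{δ+ρ} ∘ M_σ + ν` as in the main theorem:
`ρ ∈ Z(J(I(X,K)))`, `σ` multiplicative with `σ(x,y) = 1` unless `x` is minimal and `y` is
maximal, and `ν` central-valued, vanishing on `J(I(X,K))`. -/
def RepData {K : Type*} [Field K] {X : Type*} [PartialOrder X] [DecidableEq X]
    [LocallyFiniteOrder X]
    (φ : IncidenceAlgebra K X → IncidenceAlgebra K X)
    (ρ : IncidenceAlgebra K X) (σ : X → X → K)
    (ν : IncidenceAlgebra K X →ₗ[K] IncidenceAlgebra K X) : Prop :=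
  (∀ x : X, ρ x x = 0) ∧
  (∀ x y : X, x < y → (¬IsMin x ∨ ¬IsMax y) → ρ x y = 0) ∧
  (∀ x y : X, x ≤ y → σ x y ≠ 0) ∧
  (∀ x y z : X, x ≤ y → y ≤ z → σ x z = σ x y * σ y z) ∧
  (∀ x y : X, x < y → (¬IsMin x ∨ ¬IsMax y) → σ x y = 1) ∧
  (∀ f, ∃ c : K, ν f = c • (1 : IncidenceAlgebra K X)) ∧
  (∀ f : IncidenceAlgebra K X, (∀ x, f x x = 0) → ν f = 0) ∧
  (∀ f, φ f = xiMap (1 + ρ) (Mmul K σ f) + ν f)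

set_option linter.unusedSectionVars false

section helpers
variable {K : Type*} [Field K] {X : Type*} [PartialOrder X] [Fintype X] [DecidableEq X]
    [LocallyFiniteOrder X]

lemma hl_mul (f g : IncidenceAlgebra K X) (a b : X) :
    (f * g) a b = ∑ t, f a t * g t b := by
  rw [IncidenceAlgebra.mul_apply]
  apply Finset.sum_subset (Finset.subset_univ _)
  intro t _ ht
  rw [Finset.mem_Icc, not_and_or] at ht
  rcases ht with ht | ht
  · rw [apply_eq_zero_of_not_le ht, zero_mul]
  · rw [apply_eq_zero_of_not_le ht, mul_zero]

lemma hl_E (x y : X) (h : x ≤ y) (a b : X) :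
    eSingle K x y h a b = if a = x ∧ b = y then 1 else 0 := rfl

lemma hl_Emul (x y : X) (h : x ≤ y) (f : IncidenceAlgebra K X) (a b : X) :
    (eSingle K x y h * f) a b = if a = x then f y b else 0 := by
  rw [hl_mul]
  by_cases ha : a = x <;> simp [hl_E, ha]

lemma hl_mulE (x y : X) (h : x ≤ y) (f : IncidenceAlgebra K X) (a b : X) :
    (f * eSingle K x y h) a b = if b = y then f a x else 0 := by
  rw [hl_mul]
  by_cases ha : b = y <;> simp [hl_E, ha]

lemma hl_diag (f g : IncidenceAlgebra K X) (a : X) : (f * g) a a = f a a * g a a := by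
  rw [IncidenceAlgebra.mul_apply]; simp

lemma hl_mid (f g : IncidenceAlgebra K X) {u v : X} (h : u < v)
    (hm : ∀ t, u < t → t < v → f u t * g t v = 0) :
    (f * g) u v = f u u * g u v + f u v * g v v := by
  rw [IncidenceAlgebra.mul_apply]
  have : ∑ t ∈ Finset.Icc u v, f u t * g t v = ∑ t ∈ ({u, v} : Finset X), f u t * g t v := by
    symm
    apply Finset.sum_subset
    · intro t ht
      simp only [Finset.mem_insert, Finset.mem_singleton] at ht
      rcases ht with rfl | rfl <;> simp [h.le]
    · intro t ht ht'
      simp only [Finset.mem_insert, Finset.mem_singleton, not_or] at ht'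
      rw [Finset.mem_Icc] at ht
      exact hm t (lt_of_le_of_ne ht.1 (Ne.symm ht'.1)) (lt_of_le_of_ne ht.2 ht'.2)
  rw [this, Finset.sum_pair h.ne]

lemma hl_sub (f g : IncidenceAlgebra K X) (a b : X) : (f - g) a b = f a b - g a b := rfl
lemma hl_add (f g : IncidenceAlgebra K X) (a b : X) : (f + g) a b = f a b + g a b := rfl
lemma hl_neg (f : IncidenceAlgebra K X) (a b : X) : (-f) a b = -f a b := rfl
lemma hl_smul (c : K) (f : IncidenceAlgebra K X) (a b : X) : (c • f) a b = c * f a b := rfl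
lemma hl_zero (a b : X) : (0 : IncidenceAlgebra K X) a b = 0 := rfl

lemma hl_lie (f g : IncidenceAlgebra K X) (a b : X) :
    ⁅f, g⁆ a b = (f * g) a b - (g * f) a b := rfl

lemma hl_lie_diag (f g : IncidenceAlgebra K X) (a : X) : ⁅f, g⁆ a a = 0 := by
  rw [hl_lie, hl_diag, hl_diag]; ring

lemma hl_comm {x y : X} (h : x < y) (f : IncidenceAlgebra K X)
    (hc : ⁅eSingle K x y h.le, f⁆ = 0) :
    f x x = f y y ∧ (∀ w, y < w → f y w = 0) ∧ (∀ u, u < x → f u x = 0) := by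
  have hab : ∀ a b, (if a = x then f y b else 0) - (if b = y then f a x else 0) = 0 := by
    intro a b
    rw [← hl_Emul x y h.le, ← hl_mulE x y h.le, ← hl_lie, hc]; rfl
  refine ⟨?_, ?_, ?_⟩
  · have := hab x y
    simp only [if_true] at this
    exact (sub_eq_zero.1 this).symm
  · intro w hw
    simpa [hw.ne'] using hab x w
  · intro u hu
    simpa [hu.ne] using hab u y

lemma hl_EE {x y z : X} (h : x ≤ y) (h' : y ≤ z) :
    eSingle K x y h * eSingle K y z h' = eSingle K x z (h.trans h') := by
  ext a b
  rw [hl_Emul]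
  by_cases ha : a = x <;> simp [hl_E, ha]

lemma hl_EE0 {x y z w : X} (h : x ≤ y) (h' : z ≤ w) (hne : y ≠ z) :
    eSingle K x y h * eSingle K z w h' = 0 := by
  ext a b
  rw [hl_Emul]
  by_cases ha : a = x <;> simp [hl_E, hne]

lemma hl_ind (P : IncidenceAlgebra K X → Prop) (h0 : P 0)
    (hadd : ∀ f g, P f → P g → P (f + g))
    (hsmul : ∀ (c : K) f, P f → P (c • f)) (hE : ∀ x y h, P (eSingle K x y h)) (f) : P f := by
  classical
  have : f = ∑ x, ∑ y, f x y • (if h : x ≤ y then eSingle K x y h else 0) := by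
    ext a b hab
    let ev : IncidenceAlgebra K X →+ K :=
      { toFun := fun g => g a b, map_zero' := rfl, map_add' := fun _ _ => rfl }
    change _ = ev _
    rw [map_sum]
    simp only [map_sum]
    rw [Finset.sum_eq_single a, Finset.sum_eq_single b]
    · simp [ev, hl_smul, hab, hl_E]
    · intro y _ hy
      change f a y * _ = 0
      split_ifs
      · simp [hl_E, Ne.symm hy]
      · simp
    · simp
    · intro x _ hx
      apply Finset.sum_eq_zero
      intro y _
      change f x y * _ = 0
      split_ifs
      · simp [hl_E, Ne.symm hx]
      · simp
    · simp
  rw [this]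
  apply Finset.sum_induction _ _ hadd h0
  intro x _
  apply Finset.sum_induction _ _ hadd h0
  intro y _
  apply hsmul
  split_ifs
  · apply hE
  · exact h0

/-- central elements of the radical -/
def hlZJ (ρ : IncidenceAlgebra K X) : Prop :=
  (∀ x : X, ρ x x = 0) ∧ (∀ x y : X, x < y → (¬IsMin x ∨ ¬IsMax y) → ρ x y = 0)

lemma hl_notMin {x y : X} (h : x < y) : ¬ IsMin y := fun hm => (hm.not_lt h)
lemma hl_notMax {x y : X} (h : x < y) : ¬ IsMax x := fun hm => (hm.not_lt h)

lemma hl_Zmul {ρ : IncidenceAlgebra K X} (h : hlZJ ρ) (g : IncidenceAlgebra K X) (u v : X) :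
    (ρ * g) u v = ρ u v * g v v := by
  rw [hl_mul, Finset.sum_eq_single v]
  · intro t _ ht
    by_cases h1 : t ≤ v
    · by_cases h2 : u ≤ t
      · rcases h2.eq_or_lt with rfl | h2
        · rw [h.1, zero_mul]
        · rw [h.2 u t h2 (Or.inr (hl_notMax (lt_of_le_of_ne h1 ht))), zero_mul]
      · rw [apply_eq_zero_of_not_le h2, zero_mul]
    · rw [apply_eq_zero_of_not_le h1, mul_zero]
  · simp

lemma hl_mulZ {ρ : IncidenceAlgebra K X} (h : hlZJ ρ) (g : IncidenceAlgebra K X) (u v : X) :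
    (g * ρ) u v = g u u * ρ u v := by
  rw [hl_mul, Finset.sum_eq_single u]
  · intro t _ ht
    by_cases h1 : u ≤ t
    · by_cases h2 : t ≤ v
      · rcases h2.eq_or_lt with rfl | h2
        · rw [h.1, mul_zero]
        · rw [h.2 t v h2 (Or.inl (hl_notMin (lt_of_le_of_ne h1 (Ne.symm ht)))), mul_zero]
      · rw [apply_eq_zero_of_not_le h2, mul_zero]
    · rw [apply_eq_zero_of_not_le h1, zero_mul]
  · simp

lemma hl_Zcomm {ρ : IncidenceAlgebra K X} (h : hlZJ ρ) (g : IncidenceAlgebra K X)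
    (hg : ∀ x, g x x = 0) : ⁅g, ρ⁆ = 0 := by
  ext u v
  rw [hl_lie, hl_Zmul h, hl_mulZ h, hg, hg]; simp

lemma hl_xi {ρ : IncidenceAlgebra K X} (h : hlZJ ρ) (g : IncidenceAlgebra K X) (u v : X) :
    xiMap (1 + ρ) g u v = g u v + ρ u v * (g v v - g u u) := by
  have h2 : ρ * ρ = 0 := by
    ext a b; rw [hl_Zmul h, h.1]; simp
  have h3 : ρ * g * ρ = 0 := by
    ext a b; rw [hl_mulZ h, hl_Zmul h, h.1]; simp
  have e1 : (1 + ρ) * (1 - ρ) = 1 := by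
    have : (1 + ρ) * (1 - ρ) = 1 - ρ * ρ := by noncomm_ring
    rw [this, h2, sub_zero]
  have e2 : (1 - ρ) * (1 + ρ) = 1 := by
    have : (1 - ρ) * (1 + ρ) = 1 - ρ * ρ := by noncomm_ring
    rw [this, h2, sub_zero]
  have hi : Ring.inverse (1 + ρ) = 1 - ρ := by
    exact Ring.inverse_unit (⟨1 + ρ, 1 - ρ, e1, e2⟩ : (IncidenceAlgebra K X)ˣ)
  have : xiMap (1 + ρ) g = g + ρ * g - g * ρ - ρ * g * ρ := by
    unfold xiMap; rw [hi]; noncomm_ring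
  rw [this, h3, sub_zero, hl_sub, hl_add, hl_Zmul h, hl_mulZ h]; ring

lemma hl_sig {σ : X → X → K} (h1 : ∀ x y : X, x ≤ y → σ x y ≠ 0)
    (h2 : ∀ x y z : X, x ≤ y → y ≤ z → σ x z = σ x y * σ y z) (x : X) : σ x x = 1 := by
  have := h2 x x x le_rfl le_rfl
  exact (mul_eq_left₀ (h1 x x le_rfl)).1 this.symm

/-- entries of a map with representation data -/
lemma hl_rep {φ : IncidenceAlgebra K X → IncidenceAlgebra K X} {ρ σ ν} (h : RepData φ ρ σ ν)
    (f : IncidenceAlgebra K X) (u v : X) :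
    φ f u v = σ u v * f u v + ρ u v * (f v v - f u u) + ν f u v := by
  obtain ⟨a1, a2, a3, a4, a5, a6, a7, a8⟩ := h
  rw [a8, hl_add, hl_xi ⟨a1, a2⟩]
  change σ u v * f u v + ρ u v * (σ v v * f v v - σ u u * f u u) + _ = _
  rw [hl_sig a3 a4, hl_sig a3 a4, one_mul, one_mul]

lemma hl_unique {φ : IncidenceAlgebra K X → IncidenceAlgebra K X} {ρ σ ν ρ' σ' ν'}
    (h : RepData φ ρ σ ν) (h' : RepData φ ρ' σ' ν') :
    ρ' = ρ ∧ (∀ x y : X, x ≤ y → σ' x y = σ x y) ∧ ν' = ν := by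
  have r := hl_rep h
  have r' := hl_rep h'
  obtain ⟨a1, a2, a3, a4, a5, a6, a7, a8⟩ := h
  obtain ⟨b1, b2, b3, b4, b5, b6, b7, b8⟩ := h'
  refine ⟨?_, ?_, ?_⟩
  · ext u v huv
    rcases huv.eq_or_lt with rfl | huv
    · rw [a1, b1]
    · have e1 := r (eSingle K v v le_rfl) u v
      have e2 := r' (eSingle K v v le_rfl) u v
      obtain ⟨c, hc⟩ := a6 (eSingle K v v le_rfl)
      obtain ⟨c', hc'⟩ := b6 (eSingle K v v le_rfl)
      rw [hc] at e1
      rw [hc'] at e2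
      simp [hl_E, hl_smul, huv.ne, IncidenceAlgebra.one_apply] at e1 e2
      rw [← e1, ← e2]
  · intro u v huv
    rcases huv.eq_or_lt with rfl | huv
    · rw [hl_sig a3 a4, hl_sig b3 b4]
    · have hd : ∀ x, eSingle K u v huv.le x x = 0 := by
        intro x; rw [hl_E, if_neg]; rintro ⟨rfl, rfl⟩; exact lt_irrefl _ huv
      have e1 := r (eSingle K u v huv.le) u v
      have e2 := r' (eSingle K u v huv.le) u v
      rw [a7 _ hd, hd, hd] at e1
      rw [b7 _ hd, hd, hd] at e2
      simp [hl_E, hl_zero] at e1 e2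
      rw [← e1, ← e2]
  · ext f u v huv
    rcases huv.eq_or_lt with rfl | huv
    · have e1 := r f u u
      have e2 := r' f u u
      rw [hl_sig a3 a4] at e1
      rw [hl_sig b3 b4] at e2
      rw [e1] at e2
      simpa using e2.symm
    · obtain ⟨c, hc⟩ := a6 f
      obtain ⟨c', hc'⟩ := b6 f
      rw [hc, hc', hl_smul, hl_smul, IncidenceAlgebra.one_apply, if_neg huv.ne, mul_zero, mul_zero]

lemma hl_one_lie (c : K) (g : IncidenceAlgebra K X) : ⁅g, c • (1 : IncidenceAlgebra K X)⁆ = 0 := by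
  rw [Ring.lie_def]; simp

lemma hl_rev {φ : IncidenceAlgebra K X → IncidenceAlgebra K X} {ρ σ ν} (h : RepData φ ρ σ ν) :
    HomJacobi φ := by
  have r := hl_rep h
  obtain ⟨a1, a2, a3, a4, a5, a6, a7, a8⟩ := h
  have key : ∀ g f : IncidenceAlgebra K X, (∀ x, g x x = 0) → ⁅g, φ f⁆ = ⁅g, f⁆ := by
    intro g f hg
    have hz : hlZJ (φ f - f - ν f) := by
      constructor
      · intro x
        rw [hl_sub, hl_sub, r, hl_sig a3 a4]; ring
      · intro x y hxy hm
        obtain ⟨c, hc⟩ := a6 f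
        rw [hl_sub, hl_sub, r, a5 x y hxy hm, a2 x y hxy hm]; ring
    have e : φ f = f + (φ f - f - ν f) + ν f := by abel
    obtain ⟨c, hc⟩ := a6 f
    rw [e, lie_add, lie_add, hl_Zcomm hz g hg, hc, hl_one_lie, add_zero, add_zero]
  intro a b c
  rw [key _ _ (hl_lie_diag _ _), key _ _ (hl_lie_diag _ _), key _ _ (hl_lie_diag _ _)]
  have := lie_jacobi a b c
  rw [← lie_skew ⁅b, c⁆ a, ← lie_skew ⁅c, a⁆ b, ← lie_skew ⁅a, b⁆ c, ← neg_eq_zero]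
  rw [← this, ← lie_skew a ⁅b, c⁆, ← lie_skew b ⁅c, a⁆, ← lie_skew c ⁅a, b⁆]
  abel


lemma hl_lie_EE {x y z : X} (h : x < y) (h' : y < z) :
    ⁅eSingle K x y h.le, eSingle K y z h'.le⁆ = eSingle K x z (h.trans h').le := by
  rw [Ring.lie_def, hl_EE, hl_EE0 _ _ (h.trans h').ne', sub_zero]

lemma hl_lie_l {x y : X} (h : x < y) :
    ⁅eSingle K x x le_rfl, eSingle K x y h.le⁆ = eSingle K x y h.le := by
  rw [Ring.lie_def, hl_EE, hl_EE0 _ _ h.ne', sub_zero]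

lemma hl_lie_r {x y : X} (h : x < y) :
    ⁅eSingle K x y h.le, eSingle K y y le_rfl⁆ = eSingle K x y h.le := by
  rw [Ring.lie_def, hl_EE, hl_EE0 _ _ h.ne', sub_zero]

lemma hl_lie_0 {x y z w : X} (h : x ≤ y) (h' : z ≤ w) (h1 : y ≠ z) (h2 : w ≠ x) :
    ⁅eSingle K x y h, eSingle K z w h'⁆ = 0 := by
  rw [Ring.lie_def, hl_EE0 _ _ h1, hl_EE0 _ _ h2, sub_zero]

section fwd
variable (φ : IncidenceAlgebra K X ≃ₗ⁅K⁆ IncidenceAlgebra K X) (H : HomJacobi ⇑φ)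

/-- image of the diagonal idempotent -/
def hlF (z : X) : IncidenceAlgebra K X := φ (eSingle K z z le_rfl)

lemma hl_FF (z w u v : X) : (hlF φ z * hlF φ w) u v = (hlF φ w * hlF φ z) u v := by
  rw [← sub_eq_zero, ← hl_lie]
  unfold hlF
  rw [← LieEquiv.map_lie]
  by_cases h : z = w
  · subst h; rw [lie_self, map_zero]; rfl
  · rw [hl_lie_0 _ _ h (Ne.symm h), map_zero]; rfl

include H in
lemma hl_H1 {x y z : X} (h : x < y) (hx : z ≠ x) (hy : z ≠ y) :
    ⁅eSingle K x y h.le, hlF φ z⁆ = 0 := by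
  have := H (eSingle K x x le_rfl) (eSingle K x y h.le) (eSingle K z z le_rfl)
  rw [hl_lie_l h, hl_lie_0 _ _ (Ne.symm hy) hx, hl_lie_0 _ _ hx (Ne.symm hx)] at this
  simpa [hlF] using this

include H in
lemma hl_H2 {x y : X} (h : x < y) :
    ⁅eSingle K x y h.le, hlF φ x + hlF φ y⁆ = 0 := by
  have := H (eSingle K x x le_rfl) (eSingle K x y h.le) (eSingle K y y le_rfl)
  rw [hl_lie_l h, hl_lie_r h, hl_lie_0 _ _ h.ne' h.ne] at this
  rw [lie_add, add_comm]
  simpa [hlF] using this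

lemma hl_F_E (z : X) {x y : X} (h : x < y) :
    ⁅hlF φ z, φ (eSingle K x y h.le)⁆ =
      ((if z = x then 1 else 0) - (if z = y then 1 else 0) : K) • φ (eSingle K x y h.le) := by
  unfold hlF
  rw [← LieEquiv.map_lie]
  by_cases hx : z = x
  · subst hx; rw [hl_lie_l h]; simp [h.ne]
  · by_cases hy : z = y
    · subst hy; rw [← lie_skew, hl_lie_r h]; simp [h.ne']
    · rw [hl_lie_0 _ _ hx (Ne.symm hy)]; simp [hx, hy]

lemma hl_phiE_diag {x y : X} (h : x < y) (a : X) : φ (eSingle K x y h.le) a a = 0 := by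
  rw [← hl_lie_l h, LieEquiv.map_lie, hl_lie_diag]

lemma hl_phiE_ne {x y : X} (h : x < y) : φ (eSingle K x y h.le) ≠ 0 := by
  intro h0
  have : eSingle K x y h.le = 0 := by
    apply φ.injective; change φ _ = φ 0; rw [h0, map_zero]
  have h2 : eSingle K x y h.le x y = 0 := by rw [this]; rfl
  simp [hl_E] at h2

include H in
/-- diagonal differences -/
lemma hl_delta {x y : X} (h : x < y) (z : X) :
    hlF φ z x x - hlF φ z y y = (if z = x then 1 else 0) - (if z = y then 1 else 0) := by
  set g := φ (eSingle K x y h.le) with hg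
  have hex : ∃ p : X × X, g p.1 p.2 ≠ 0 := by
    by_contra hcon
    push Not at hcon
    apply hl_phiE_ne φ h
    ext a b
    exact hcon (a, b)
  let S : Finset (X × X) := by
    classical exact Finset.univ.filter (fun p => g p.1 p.2 ≠ 0)
  have hS : S.Nonempty := by
    obtain ⟨p, hp⟩ := hex
    exact ⟨p, by simp [S, hp]⟩
  obtain ⟨⟨u, v⟩, huvS, hmin⟩ := S.exists_min_image (fun p => (Finset.Icc p.1 p.2).card) hS
  have huv : g u v ≠ 0 := by simpa [S] using huvS
  have hle : u ≤ v := by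
    by_contra hn; exact huv (apply_eq_zero_of_not_le hn g)
  have hlt : u < v := by
    refine lt_of_le_of_ne hle ?_
    rintro rfl
    exact huv (hl_phiE_diag φ h u)
  have hsub : ∀ a b, u ≤ a → a ≤ b → b ≤ v → (u < a ∨ b < v) → g a b = 0 := by
    intro a b h1 h2 h3 h4
    by_contra hab
    have := hmin (a, b) (by simp [S, hab])
    refine absurd this (not_le.2 ?_)
    apply Finset.card_lt_card
    rw [Finset.ssubset_iff_of_subset (Finset.Icc_subset_Icc h1 h3)]
    rcases h4 with h4 | h4
    · exact ⟨u, by simp [hle], by simp [h4.not_ge]⟩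
    · exact ⟨v, by simp [hle], by simp [h4.not_ge]⟩
  have key : ∀ z, hlF φ z u u - hlF φ z v v =
      (if z = x then 1 else 0) - (if z = y then 1 else 0) := by
    intro z
    have e := congrArg (fun f : IncidenceAlgebra K X => f u v) (hl_F_E φ z h)
    simp only [← hg] at e
    rw [hl_lie, hl_smul, hl_mid _ _ hlt, hl_mid _ _ hlt, hl_phiE_diag φ h, hl_phiE_diag φ h] at e
    · apply mul_right_cancel₀ huv
      rw [← e]; ring
    · intro t h1 h2
      rw [hsub u t le_rfl h1.le h2.le (Or.inr h2), zero_mul]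
    · intro t h1 h2
      rw [hsub t v h1.le h2.le le_rfl (Or.inl h1), mul_zero]
  have hxy : ∀ z, z ≠ u → z ≠ v → hlF φ z u u - hlF φ z v v = 0 := by
    intro z h1 h2
    rw [(hl_comm hlt _ (hl_H1 φ H hlt h1 h2)).1, sub_self]
  have hx : x = u ∨ x = v := by
    by_contra hn
    push Not at hn
    have := key x
    rw [hxy x hn.1 hn.2] at this
    simp [h.ne] at this
  have hy : y = u ∨ y = v := by
    by_contra hn
    push Not at hn
    have := key y
    rw [hxy y hn.1 hn.2] at this
    simp [h.ne'] at this
  have : u = x ∧ v = y := by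
    rcases hx with rfl | rfl <;> rcases hy with rfl | rfl
    · exact absurd h (lt_irrefl _)
    · exact ⟨rfl, rfl⟩
    · exact absurd h hlt.not_gt
    · exact absurd h (lt_irrefl _)
  obtain ⟨rfl, rfl⟩ := this
  exact key z

include H in
lemma hl_nonmin {x u v : X} (hxu : x < u) (huv : u < v) (z : X) : hlF φ z u v = 0 := by
  have h1 : ∀ t w z, x < t → t < w → z ≠ x → z ≠ t → hlF φ z t w = 0 := by
    intro t w z ht hw h1 h2
    exact (hl_comm ht _ (hl_H1 φ H ht h1 h2)).2.1 w hw
  have h2 : hlF φ x u v + hlF φ u u v = 0 :=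
    (hl_comm hxu _ (hl_H2 φ H hxu)).2.1 v huv
  have h3 : hlF φ u u v = 0 := by
    have hxv : v ≠ x := (hxu.trans huv).ne'
    have e := hl_FF φ u v u v
    rw [hl_mid _ _ huv, hl_mid _ _ huv, h1 u v v hxu huv hxv huv.ne'] at e
    · have d := hl_delta φ H huv v
      simp only [huv.ne', if_true, if_false] at d
      have : hlF φ u u v * (hlF φ v u u - hlF φ v v v) = 0 := by linear_combination -e
      rw [d] at this
      simpa using this
    · intro t ht1 ht2
      rw [h1 u t v hxu ht1 hxv huv.ne', zero_mul]
    · intro t ht1 ht2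
      rw [h1 t v v (hxu.trans ht1) ht2 hxv ht2.ne', mul_zero]
  by_cases hx : z = x
  · subst hx; rwa [h3, add_zero] at h2
  · by_cases hu : z = u
    · subst hu; exact h3
    · exact h1 u v z hxu huv hx hu

include H in
lemma hl_nonmax {y u v : X} (hvy : v < y) (huv : u < v) (z : X) : hlF φ z u v = 0 := by
  have h1 : ∀ t w z, t < w → w < y → z ≠ w → z ≠ y → hlF φ z t w = 0 := by
    intro t w z ht hw h1 h2
    exact (hl_comm hw _ (hl_H1 φ H hw h1 h2)).2.2 t ht
  have h2 : hlF φ v u v + hlF φ y u v = 0 :=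
    (hl_comm hvy _ (hl_H2 φ H hvy)).2.2 u huv
  have h3 : hlF φ v u v = 0 := by
    have huy : u ≠ y := (huv.trans hvy).ne
    have e := hl_FF φ v u u v
    rw [hl_mid _ _ huv, hl_mid _ _ huv, h1 u v u huv hvy huv.ne huy] at e
    · have d := hl_delta φ H huv u
      simp only [huv.ne, if_true, if_false] at d
      have : hlF φ v u v * (hlF φ u u u - hlF φ u v v) = 0 := by linear_combination -e
      rw [d] at this
      simpa using this
    · intro t ht1 ht2
      rw [h1 u t u ht1 (ht2.trans hvy) ht1.ne huy, zero_mul]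
    · intro t ht1 ht2
      rw [h1 t v u ht2 hvy huv.ne huy, mul_zero]
  by_cases hy : z = y
  · subst hy; rwa [h3, zero_add] at h2
  · by_cases hu : z = v
    · subst hu; exact h3
    · exact h1 u v z huv hvy hu hy

include H in
lemma hl_nonext {u v : X} (huv : u < v) (hm : ¬ IsMin u ∨ ¬ IsMax v) (z : X) :
    hlF φ z u v = 0 := by
  rcases hm with hm | hm
  · obtain ⟨x, hx⟩ := not_isMin_iff.1 hm
    exact hl_nonmin φ H hx huv z
  · obtain ⟨x, hx⟩ := not_isMax_iff.1 hm
    exact hl_nonmax φ H hx huv z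

include H in
lemma hl_FFuv {u v : X} (huv : u < v) (z w : X) :
    (hlF φ z u u - hlF φ z v v) * hlF φ w u v = (hlF φ w u u - hlF φ w v v) * hlF φ z u v := by
  have e := hl_FF φ z w u v
  rw [hl_mid _ _ huv, hl_mid _ _ huv] at e
  · linear_combination e
  · intro t ht1 ht2
    rw [hl_nonmax φ H ht2 ht1, zero_mul]
  · intro t ht1 ht2
    rw [hl_nonmax φ H ht2 ht1, zero_mul]

include H in
/-- off-diagonal entries of the images of idempotents -/
lemma hl_F_off {u v : X} (huv : u < v) (z : X) :
    hlF φ z u v = - hlF φ u u v * ((if z = v then 1 else 0) - (if z = u then 1 else 0)) := by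
  have e := hl_FFuv φ H huv u z
  rw [hl_delta φ H huv, hl_delta φ H huv] at e
  simp only [huv.ne, if_true, if_false] at e
  linear_combination e

variable (hconn : ∀ x y : X, Relation.ReflTransGen (fun a b : X => a ≤ b ∨ b ≤ a) x y)
include H hconn in
lemma hl_F_diag (z x y : X) : hlF φ z x x - (if z = x then 1 else 0) =
    hlF φ z y y - (if z = y then 1 else 0) := by
  have step : ∀ a b : X, a ≤ b → hlF φ z a a - (if z = a then 1 else 0) =
      hlF φ z b b - (if z = b then 1 else 0) := by
    intro a b hab
    rcases hab.eq_or_lt with rfl | hab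
    · rfl
    · linear_combination hl_delta φ H hab z
  induction hconn x y with
  | refl => rfl
  | tail _ hs ih =>
    rw [ih]
    rcases hs with hs | hs
    · exact step _ _ hs
    · exact (step _ _ hs).symm

include H hconn in
/-- brackets of the radical with images of idempotents -/
lemma hl_J_F (g : IncidenceAlgebra K X) (hg : ∀ x, g x x = 0) (z : X) :
    ⁅g, hlF φ z⁆ = ⁅g, eSingle K z z le_rfl⁆ := by
  set c := hlF φ z z z - 1
  have hz : hlZJ (hlF φ z - eSingle K z z le_rfl - c • 1) := by
    constructor
    · intro x
      have := hl_F_diag φ H hconn z x z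
      rw [hl_sub, hl_sub, hl_smul, IncidenceAlgebra.one_apply, hl_E]
      simp only [if_true, and_self, mul_one, eq_comm (a := x)] at this ⊢
      linear_combination this
    · intro x y hxy hm
      rw [hl_sub, hl_sub, hl_smul, IncidenceAlgebra.one_apply, hl_E, hl_nonext φ H hxy hm,
        if_neg hxy.ne, if_neg]
      · simp
      · rintro ⟨rfl, rfl⟩; exact lt_irrefl _ hxy
  have e : hlF φ z = eSingle K z z le_rfl + (hlF φ z - eSingle K z z le_rfl - c • 1) + c • 1 := by
    abel
  rw [e, lie_add, lie_add, hl_Zcomm hz g hg, hl_one_lie, add_zero, add_zero]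

include H hconn in
lemma hl_phiE {x y : X} (h : x < y) : φ (eSingle K x y h.le) =
    (φ (eSingle K x y h.le) x y) • eSingle K x y h.le := by
  set g := φ (eSingle K x y h.le) with hg
  have hd : ∀ a, g a a = 0 := hl_phiE_diag φ h
  have key : ∀ z u v, (if v = z then g u z else 0) - (if u = z then g z v else 0) =
      - (((if z = x then 1 else 0) - (if z = y then 1 else 0)) * g u v) := by
    intro z u v
    rw [← hl_mulE z z le_rfl, ← hl_Emul z z le_rfl, ← hl_lie, ← hl_J_F φ H hconn g hd,
      ← lie_skew, hl_F_E φ z h, hl_neg, hl_smul]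
  ext u v huv
  rw [hl_smul, hl_E]
  by_cases h0 : g u v = 0
  · rw [h0]
    split_ifs with hh
    · obtain ⟨rfl, rfl⟩ := hh; rw [h0]; simp
    · simp
  have hlt : u < v := by
    refine lt_of_le_of_ne huv ?_
    rintro rfl; exact h0 (hd u)
  have hx : x = u ∨ x = v := by
    by_contra hn
    push Not at hn
    have := key x u v
    simp [h.ne, hn.1.symm, hn.2.symm] at this
    first | exact h0 this | exact h0 this.symm
  have hy : y = u ∨ y = v := by
    by_contra hn
    push Not at hn
    have := key y u v
    simp [h.ne', hn.1.symm, hn.2.symm] at this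
    first | exact h0 this | exact h0 this.symm
  have : u = x ∧ v = y := by
    rcases hx with rfl | rfl <;> rcases hy with rfl | rfl
    · exact absurd h (lt_irrefl _)
    · exact ⟨rfl, rfl⟩
    · exact absurd h hlt.not_gt
    · exact absurd h (lt_irrefl _)
  simp [this]

/-- the multiplier -/
noncomputable def hlσ (x y : X) : K := by
  classical exact if h : x < y then φ (eSingle K x y h.le) x y else 1

lemma hlσ_lt {x y : X} (h : x < y) : hlσ φ x y = φ (eSingle K x y h.le) x y := dif_pos h
lemma hlσ_self (x : X) : hlσ φ x x = 1 := dif_neg (lt_irrefl x)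

include H hconn in
lemma hl_phiE' {x y : X} (h : x < y) : φ (eSingle K x y h.le) =
    hlσ φ x y • eSingle K x y h.le := by
  rw [hlσ_lt φ h]; exact hl_phiE φ H hconn h

lemma hl_Ediag {x y : X} (h : x < y) (a : X) : eSingle K x y h.le a a = 0 := by
  rw [hl_E, if_neg]; rintro ⟨rfl, rfl⟩; exact lt_irrefl _ h

include H hconn in
lemma hlσ_trans {x y z : X} (h : x < y) (h' : y < z) :
    hlσ φ x y = 1 ∧ hlσ φ y z = 1 := by
  have hne : (eSingle K x z (h.trans h').le) ≠ 0 := by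
    intro h0
    have h2 : eSingle K x z (h.trans h').le x z = 0 := by rw [h0]; rfl
    simp [hl_E] at h2
  have h3 := h.trans h'
  constructor
  · have := H (eSingle K z z le_rfl) (eSingle K x y h.le) (eSingle K y z h'.le)
    rw [hl_lie_0 _ _ h3.ne' h'.ne, hl_lie_EE h h', hl_lie_r h', hl_phiE' φ H hconn h] at this
    have e := hl_J_F φ H hconn _ (hl_Ediag (K := K) h3) z
    unfold hlF at e
    rw [e, hl_lie_r h3, zero_lie, zero_add, lie_smul, ← lie_skew (eSingle K y z _), hl_lie_EE h h'] at this
    have h5 : (1 - hlσ φ x y) • eSingle K x z h3.le = 0 := by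
      rw [← this, sub_smul, one_smul, smul_neg, sub_eq_add_neg]
    rcases smul_eq_zero.1 h5 with h6 | h6
    · exact (sub_eq_zero.1 h6).symm
    · exact absurd h6 hne
  · have := H (eSingle K x x le_rfl) (eSingle K x y h.le) (eSingle K y z h'.le)
    rw [hl_lie_l h, hl_lie_EE h h', hl_lie_0 _ _ h3.ne' h.ne, hl_phiE' φ H hconn h'] at this
    have e := hl_J_F φ H hconn _ (hl_Ediag (K := K) h3) x
    unfold hlF at e
    rw [e, lie_smul, ← lie_skew (eSingle K x z _), hl_lie_l h3, hl_lie_EE h h', zero_lie,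
      add_zero] at this
    have h5 : (hlσ φ y z - 1) • eSingle K x z h3.le = 0 := by
      rw [← this, sub_smul, one_smul, sub_eq_add_neg]
    rcases smul_eq_zero.1 h5 with h6 | h6
    · exact (sub_eq_zero.1 h6)
    · exact absurd h6 hne

include H hconn in
lemma hlσ_mul {x y z : X} (h : x < y) (h' : y < z) :
    hlσ φ x z = hlσ φ x y * hlσ φ y z := by
  rw [hlσ_lt φ (h.trans h'), ← hl_lie_EE h h', LieEquiv.map_lie, hl_phiE' φ H hconn h,
    hl_phiE' φ H hconn h', lie_smul, smul_lie, hl_lie_EE h h', hl_smul, hl_smul, hl_E]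
  simp
  ring

/-- the central radical element -/
noncomputable def hlρ : IncidenceAlgebra K X where
  toFun u v := if u = v then 0 else - hlF φ u u v
  eq_zero_of_not_le' u v huv := by
    rw [apply_eq_zero_of_not_le huv]; simp

lemma hlρ_lt {u v : X} (h : u < v) : hlρ φ u v = - hlF φ u u v := if_neg h.ne

/-- the central part -/
noncomputable def hlν (x0 : X) : IncidenceAlgebra K X →ₗ[K] IncidenceAlgebra K X where
  toFun f := (φ f x0 x0 - f x0 x0) • 1
  map_add' f g := by
    rw [map_add, hl_add, hl_add, ← add_smul]; congr 1; ring
  map_smul' c f := by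
    rw [map_smul, hl_smul, hl_smul, RingHom.id_apply, smul_smul]; congr 1; ring

include H hconn in
lemma hl_entries (x0 : X) (f : IncidenceAlgebra K X) :
    (∀ u, φ f u u = f u u + (φ f x0 x0 - f x0 x0)) ∧
    (∀ u v, u < v → φ f u v = hlσ φ u v * f u v + hlρ φ u v * (f v v - f u u)) := by
  revert f
  apply hl_ind
  · simp [hl_zero]
  · rintro f g ⟨h1, h2⟩ ⟨h3, h4⟩
    refine ⟨fun u => ?_, fun u v huv => ?_⟩
    · simp only [map_add, hl_add]
      linear_combination h1 u + h3 u
    · simp only [map_add, hl_add]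
      linear_combination h2 u v huv + h4 u v huv
  · rintro c f ⟨h1, h2⟩
    refine ⟨fun u => ?_, fun u v huv => ?_⟩
    · simp only [map_smul, hl_smul]
      linear_combination c * h1 u
    · simp only [map_smul, hl_smul]
      linear_combination c * h2 u v huv
  · intro x y h
    rcases h.eq_or_lt with rfl | h
    · refine ⟨fun u => ?_, fun u v huv => ?_⟩
      · have := hl_F_diag φ H hconn x u x0
        unfold hlF at this
        simp only [hl_E, and_self]
        simp only [eq_comm (a := x)] at this
        linear_combination this
      · have := hl_F_off φ H huv x
        rw [hlρ_lt φ huv]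
        have h0 : ¬ (u = x ∧ v = x) := by rintro ⟨rfl, rfl⟩; exact lt_irrefl _ huv
        simp only [hl_E, and_self, if_neg h0]
        simp only [eq_comm (a := x)] at this
        rw [mul_zero, zero_add, ← this]; rfl
    · have hd := hl_Ediag (K := K) h
      rw [hl_phiE' φ H hconn h]
      refine ⟨fun u => ?_, fun u v huv => ?_⟩
      · simp only [hl_smul, hd]; ring
      · simp only [hl_smul, hd, hl_E]
        split_ifs with hh
        · obtain ⟨rfl, rfl⟩ := hh; ring
        · ring

include H hconn in
lemma hl_fwd (x0 : X) : RepData ⇑φ (hlρ φ) (hlσ φ) (hlν φ x0) := by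
  have hρ : hlZJ (hlρ φ) := by
    constructor
    · intro x; exact if_pos rfl
    · intro x y hxy hm
      rw [hlρ_lt φ hxy, hl_nonext φ H hxy hm, neg_zero]
  refine ⟨hρ.1, hρ.2, ?_, ?_, ?_, ?_, ?_, ?_⟩
  · intro x y hxy
    rcases hxy.eq_or_lt with rfl | hxy
    · rw [hlσ_self]; exact one_ne_zero
    · intro h0
      have := hl_phiE' φ H hconn hxy
      rw [h0, zero_smul] at this
      exact hl_phiE_ne φ hxy this
  · intro x y z hxy hyz
    rcases hxy.eq_or_lt with rfl | hxy
    · rw [hlσ_self, one_mul]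
    rcases hyz.eq_or_lt with rfl | hyz
    · rw [hlσ_self, mul_one]
    exact hlσ_mul φ H hconn hxy hyz
  · intro x y hxy hm
    rcases hm with hm | hm
    · obtain ⟨w, hw⟩ := not_isMin_iff.1 hm
      exact (hlσ_trans φ H hconn hw hxy).2
    · obtain ⟨w, hw⟩ := not_isMax_iff.1 hm
      exact (hlσ_trans φ H hconn hxy hw).1
  · intro f; exact ⟨_, rfl⟩
  · intro f hf
    have h0 : φ f x0 x0 = 0 := by
      revert hf
      suffices h : ∀ f : IncidenceAlgebra K X, φ (f - ∑ x, f x x • eSingle K x x le_rfl) x0 x0 = 0 by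
        intro hf
        have := h f
        simpa [hf] using this
      apply hl_ind
      · simp [hl_zero]
      · intro f g h1 h2
        simp only [hl_add, add_smul, Finset.sum_add_distrib]
        rw [add_sub_add_comm, map_add, hl_add, h1, h2, add_zero]
      · intro c f h1
        simp only [hl_smul, mul_smul, ← Finset.smul_sum]
        rw [← smul_sub, map_smul, hl_smul, h1, mul_zero]
      · intro x y h
        rcases h.eq_or_lt with rfl | h
        · rw [Finset.sum_eq_single x]
          · simp [hl_E, hl_zero]
          · intro b _ hb; simp [hl_E, hb]
          · simp
        · simp only [hl_Ediag h, zero_smul, Finset.sum_const_zero, sub_zero]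
          exact hl_phiE_diag φ h x0
    change (φ f x0 x0 - f x0 x0) • (1 : IncidenceAlgebra K X) = 0
    rw [h0, hf, sub_zero, zero_smul]
  · intro f
    obtain ⟨h1, h2⟩ := hl_entries φ H hconn x0 f
    ext u v huv
    rw [hl_add, hl_xi hρ]
    change _ = hlσ φ u v * f u v + hlρ φ u v * (hlσ φ v v * f v v - hlσ φ u u * f u u) +
      ((φ f x0 x0 - f x0 x0) • (1 : IncidenceAlgebra K X)) u v
    rw [hl_smul, IncidenceAlgebra.one_apply, hlσ_self, hlσ_self]
    rcases huv.eq_or_lt with rfl | huv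
    · rw [h1, hρ.1, hlσ_self, if_pos rfl]; ring
    · rw [h2 u v huv, if_neg huv.ne]; ring

end fwd
end helpers

/-- main theorem -/
theorem stmt8 {K : Type*} [Field K] {X : Type*} [PartialOrder X] [Fintype X] [DecidableEq X]
    [LocallyFiniteOrder X]
    (hcard : 1 < Fintype.card X)
    (hconn : ∀ x y : X, Relation.ReflTransGen (fun a b : X => a ≤ b ∨ b ≤ a) x y)
    (φ : IncidenceAlgebra K X ≃ₗ⁅K⁆ IncidenceAlgebra K X) :
    HomJacobi ⇑φ ↔
      ∃ (ρ : IncidenceAlgebra K X) (σ : X → X → K)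
        (ν : IncidenceAlgebra K X →ₗ[K] IncidenceAlgebra K X),
        RepData ⇑φ ρ σ ν ∧
        ∀ (ρ' : IncidenceAlgebra K X) (σ' : X → X → K)
          (ν' : IncidenceAlgebra K X →ₗ[K] IncidenceAlgebra K X),
          RepData ⇑φ ρ' σ' ν' →
            ρ' = ρ ∧ (∀ x y : X, x ≤ y → σ' x y = σ x y) ∧ ν' = ν := by
  constructor
  · intro H
    have hX : Nonempty X := Fintype.card_pos_iff.1 (by omega)
    obtain ⟨x0⟩ := hX
    have h := hl_fwd φ H hconn x0
    exact ⟨_, _, _, h, fun ρ' σ' ν' h' => hl_unique h h'⟩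
  · rintro ⟨ρ, σ, ν, h, -⟩
    exact hl_rev h
end

section
/- Suppose X has length 1, i.e., X contains no chain x < y < z. Then for every unit β of I(X,K) and every multiplicative map σ : {(x,y) ∈ X² : x≤y} → K∖{0} there exist a unit β' of I(X,K) with β'(x,x) = 1 for all x ∈ X and a multiplicative map σ' such that ξ_β ∘ M_σ = ξ_{β'} ∘ M_{σ'}. Explicitly, writing β = ε + ρ with ε the diagonal part and ρ ∈ J(I(X,K)), one may take σ'(x,y) = ε(x,x)ε(y,y)⁻¹σ(x,y) for x < y and β' = δ + ρε⁻¹. -/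
open IncidenceAlgebra

/-- The diagonal element with entries `d`. -/
def dg10 {K : Type*} [Field K] {X : Type*} [PartialOrder X] [DecidableEq X]
    (d : X → K) : IncidenceAlgebra K X where
  toFun u v := if u = v then d u else 0
  eq_zero_of_not_le' u v huv := by
    rw [if_neg]
    rintro rfl
    exact huv le_rfl

theorem dg10_apply {K : Type*} [Field K] {X : Type*} [PartialOrder X] [DecidableEq X]
    (d : X → K) (x y : X) : dg10 d x y = if x = y then d x else 0 := rfl

theorem Mmul_apply10 {K : Type*} [Field K] {X : Type*} [PartialOrder X]
    (σ : X → X → K) (f : IncidenceAlgebra K X) (x y : X) : Mmul K σ f x y = σ x y * f x y := rfl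

theorem mul_dg10 {K : Type*} [Field K] {X : Type*} [PartialOrder X] [DecidableEq X]
    [LocallyFiniteOrder X] (d : X → K) (f : IncidenceAlgebra K X) (x y : X) (h : x ≤ y) :
    (f * dg10 d) x y = f x y * d y := by
  simp [dg10_apply, h]

theorem dg10_mul {K : Type*} [Field K] {X : Type*} [PartialOrder X] [DecidableEq X]
    [LocallyFiniteOrder X] (d : X → K) (f : IncidenceAlgebra K X) (x y : X) (h : x ≤ y) :
    (dg10 d * f) x y = d x * f x y := by
  simp [dg10_apply, h]

theorem dg10_inv {K : Type*} [Field K] {X : Type*} [PartialOrder X] [DecidableEq X]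
    [LocallyFiniteOrder X] (d e : X → K) (h : ∀ x, d x * e x = 1) :
    (dg10 d * dg10 e : IncidenceAlgebra K X) = 1 := by
  ext x y hxy
  rw [dg10_mul _ _ _ _ hxy, dg10_apply, one_apply]
  split_ifs
  · exact h x
  · simp

theorem stmt10 {K : Type*} [Field K] {X : Type*} [PartialOrder X] [Fintype X] [DecidableEq X]
    [LocallyFiniteOrder X]
    (hcard : 1 < Fintype.card X)
    (hconn : ∀ x y : X, Relation.ReflTransGen (fun a b : X => a ≤ b ∨ b ≤ a) x y)
    (hlen : ¬∃ x y z : X, x < y ∧ y < z)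
    (β : IncidenceAlgebra K X) (hβ : IsUnit β)
    (σ : X → X → K)
    (hσ0 : ∀ x y : X, x ≤ y → σ x y ≠ 0)
    (hσm : ∀ x y z : X, x ≤ y → y ≤ z → σ x z = σ x y * σ y z) :
    ∃ (β' : IncidenceAlgebra K X) (σ' : X → X → K),
      IsUnit β' ∧ (∀ x : X, β' x x = 1) ∧
      (∀ x y : X, x < y → β' x y = β x y * (β y y)⁻¹) ∧
      (∀ x y : X, x ≤ y → σ' x y ≠ 0) ∧
      (∀ x y z : X, x ≤ y → y ≤ z → σ' x z = σ' x y * σ' y z) ∧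
      (∀ x y : X, x < y → σ' x y = β x x * (β y y)⁻¹ * σ x y) ∧
      ∀ f, xiMap β (Mmul K σ f) = xiMap β' (Mmul K σ' f) := by
  have hd : ∀ x, β x x ≠ 0 := by
    intro x
    obtain ⟨u, rfl⟩ := hβ
    have h := congrArg (fun g : IncidenceAlgebra K X => g x x) u.mul_inv
    simp only [mul_apply, Finset.Icc_self, Finset.sum_singleton, one_apply, if_true] at h
    exact left_ne_zero_of_mul (h ▸ one_ne_zero)
  obtain ⟨u, hu⟩ := hβ
  let e : (IncidenceAlgebra K X)ˣ :=
    ⟨dg10 (fun x => β x x), dg10 (fun x => (β x x)⁻¹),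
      dg10_inv _ _ (fun x => mul_inv_cancel₀ (hd x)),
      dg10_inv _ _ (fun x => inv_mul_cancel₀ (hd x))⟩
  have hv : ∀ x y, x ≤ y → ((u * e⁻¹ : (IncidenceAlgebra K X)ˣ) : IncidenceAlgebra K X) x y
      = β x y * (β y y)⁻¹ := by
    intro x y h
    rw [Units.val_mul, hu]
    exact mul_dg10 _ _ _ _ h
  refine ⟨((u * e⁻¹ : (IncidenceAlgebra K X)ˣ) : IncidenceAlgebra K X),
    fun x y => β x x * (β y y)⁻¹ * σ x y, Units.isUnit _, ?_, ?_, ?_, ?_, ?_, ?_⟩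
  · intro x
    rw [hv x x le_rfl, mul_inv_cancel₀ (hd x)]
  · intro x y h
    exact hv x y h.le
  · intro x y h
    exact mul_ne_zero (mul_ne_zero (hd x) (inv_ne_zero (hd y))) (hσ0 x y h)
  · intro x y z h1 h2
    have := hd y
    have := hd z
    simp only [hσm x y z h1 h2]
    field_simp
  · intro x y h
    rfl
  · intro f
    have key : Mmul K (fun x y => β x x * (β y y)⁻¹ * σ x y) f
        = (e : IncidenceAlgebra K X) * Mmul K σ f * ((e⁻¹ : (IncidenceAlgebra K X)ˣ)) := by
      ext x y h
      change _ = (dg10 (fun x => β x x) * Mmul K σ f * dg10 (fun x => (β x x)⁻¹)) x y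
      rw [mul_dg10 _ _ _ _ h, dg10_mul _ _ _ _ h, Mmul_apply10, Mmul_apply10]
      ring
    rw [key, ← hu]
    unfold xiMap
    rw [Ring.inverse_unit, Ring.inverse_unit]
    simp [mul_assoc]
end
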